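/- arXiv:2605.16016 — 3 statements merged into one kernel-verified Lean document; each statement's English description precedes it below -/
import Mathlib

section
/- Every 8×8 complex matrix M that commutes with each of I₂⊗X⊗X, I₂⊗Y⊗Y, and I₂⊗Z⊗Z lies in the ℂ-linear span of the sixteen matrices P⊗Q, where P ranges over {I₂, X, Y, Z} and Q ranges over {I₂⊗I₂, X⊗X, Y⊗Y, Z⊗Z}. -/
/-!
Cut `M` into four 4×4 blocks along the first qubit. Commuting with `I₂ ⊗ Q` means that each block
commutes with `Q`. The matrices `X ⊗ X` and `Z ⊗ Z` are simultaneously diagonal in the Bell basis,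
with four distinct pairs of eigenvalues, so their commutant is 4-dimensional and equals the span of
`I₂ ⊗ I₂`, `X ⊗ X`, `Y ⊗ Y`, `Z ⊗ Z` (`mem_span_of_commute`, checked on entries). Since the Pauli
matrices span all 2×2 matrices (`single_mem_span_pauli`), writing `M` as the sum over `i, j` of
`Eᵢⱼ ⊗ Mᵢⱼ` and using bilinearity of the Kronecker product gives the claim.
-/

open Matrix Kronecker

noncomputable section

abbrev M2 : Type := Matrix (Fin 2) (Fin 2) ℂ
abbrev M4 : Type := Matrix (Fin 2 × Fin 2) (Fin 2 × Fin 2) ℂ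
abbrev M8 : Type := Matrix (Fin 2 × Fin 2 × Fin 2) (Fin 2 × Fin 2 × Fin 2) ℂ

/-- Pauli X -/
def σx : M2 := !![0, 1; 1, 0]
/-- Pauli Y -/
def σy : M2 := !![0, -Complex.I; Complex.I, 0]
/-- Pauli Z -/
def σz : M2 := !![1, 0; 0, -1]
/-- 2×2 identity -/
def I₂ : M2 := 1

/-- The 4×4 block of an 8×8 matrix at position `(i, j)` of the first qubit. -/
def qubitBlock (M : M8) (i j : Fin 2) : M4 := M.submatrix (Prod.mk i) (Prod.mk j)

lemma qubitBlock_commute (M : M8) (Q : M4) (h : M * (I₂ ⊗ₖ Q) = (I₂ ⊗ₖ Q) * M) (i j : Fin 2) :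
    qubitBlock M i j * Q = Q * qubitBlock M i j := by
  ext a b
  have h' := congrFun (congrFun h (i, a)) (j, b)
  simpa [I₂, qubitBlock, Matrix.mul_apply, Fintype.sum_prod_type (α₁ := Fin 2) (α₂ := Fin 2 × Fin 2),
    Matrix.one_apply, Finset.sum_ite_irrel, ite_mul, mul_ite] using h'

lemma eq_sum_single_kronecker_qubitBlock (M : M8) :
    M = ∑ i, ∑ j, Matrix.single i j (1 : ℂ) ⊗ₖ qubitBlock M i j := by
  ext ⟨i, a⟩ ⟨j, b⟩
  fin_cases i <;> fin_cases j <;> simp [qubitBlock, Matrix.sum_apply, Matrix.single_apply]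

lemma single_mem_span_pauli (i j : Fin 2) :
    Matrix.single i j (1 : ℂ) ∈ Submodule.span ℂ ({I₂, σx, σy, σz} : Set M2) := by
  simp only [Submodule.mem_span_insert, Submodule.mem_span_singleton]
  -- `E₀₀, E₁₁ = (I₂ ± Z) / 2` and `E₀₁, E₁₀ = (X ± iY) / 2`
  refine ⟨if i = j then 1 / 2 else 0, _, ⟨if i = j then 0 else 1 / 2, _,
    ⟨if i = j then 0 else if i = 0 then Complex.I / 2 else -Complex.I / 2, _,
      ⟨if i = j then (if i = 0 then 1 / 2 else -1 / 2) else 0, rfl⟩, rfl⟩, rfl⟩, ?_⟩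
  ext a b
  fin_cases i <;> fin_cases j <;> fin_cases a <;> fin_cases b <;>
    simp [I₂, σx, σy, σz] <;> ring_nf <;> simp <;> norm_num

/-- The commutant of `X ⊗ X` and `Z ⊗ Z`. Commuting with `Z ⊗ Z` kills the entries between indices
of different parity, and commuting with `X ⊗ X` makes the entries invariant under flipping both
qubits. -/
lemma mem_span_of_commute (A : M4) (hX : A * (σx ⊗ₖ σx) = (σx ⊗ₖ σx) * A)
    (hZ : A * (σz ⊗ₖ σz) = (σz ⊗ₖ σz) * A) :
    A ∈ Submodule.span ℂ
      ({I₂ ⊗ₖ I₂, σx ⊗ₖ σx, σy ⊗ₖ σy, σz ⊗ₖ σz} : Set M4) := by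
  have hx : ∀ a b c d, A (a, b) (c, d) = A (1 - a, 1 - b) (1 - c, 1 - d) := by
    intro a b c d
    have h := congrFun (congrFun hX (a, b)) (1 - c, 1 - d)
    fin_cases a <;> fin_cases b <;> fin_cases c <;> fin_cases d <;>
      simpa [σx, Matrix.mul_apply, Fintype.sum_prod_type] using h
  have hz : ∀ a b c d, a + b ≠ c + d → A (a, b) (c, d) = 0 := by
    intro a b c d hne
    have h := congrFun (congrFun hZ (a, b)) (c, d)
    fin_cases a <;> fin_cases b <;> fin_cases c <;> fin_cases d <;>
      first
      | exact absurd rfl hne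
      | (simp [σz, Matrix.mul_apply, Fintype.sum_prod_type] at h
         first
         | exact self_eq_neg.mp h
         | exact neg_eq_self.mp h)
  simp only [Submodule.mem_span_insert, Submodule.mem_span_singleton]
  refine ⟨(A (0, 0) (0, 0) + A (0, 1) (0, 1)) / 2, _,
    ⟨(A (0, 0) (1, 1) + A (0, 1) (1, 0)) / 2, _,
    ⟨(A (0, 1) (1, 0) - A (0, 0) (1, 1)) / 2, _,
      ⟨(A (0, 0) (0, 0) - A (0, 1) (0, 1)) / 2, rfl⟩, rfl⟩, rfl⟩, ?_⟩
  have h1 : A (1, 1) (1, 1) = A (0, 0) (0, 0) := hx 1 1 1 1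
  have h2 : A (1, 0) (1, 0) = A (0, 1) (0, 1) := hx 1 0 1 0
  have h3 : A (1, 1) (0, 0) = A (0, 0) (1, 1) := hx 1 1 0 0
  have h4 : A (1, 0) (0, 1) = A (0, 1) (1, 0) := hx 1 0 0 1
  ext ⟨a, b⟩ ⟨c, d⟩
  fin_cases a <;> fin_cases b <;> fin_cases c <;> fin_cases d <;>
    first
    | (rw [hz _ _ _ _ (by decide)]; simp [I₂, σx, σy, σz])
    | (simp [I₂, σx, σy, σz, h1, h2, h3, h4]; ring)

/-- Every 8×8 complex matrix commuting with I₂⊗X⊗X, I₂⊗Y⊗Y and I₂⊗Z⊗Z lies in the ℂ-span of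
the sixteen matrices P⊗Q with P ∈ {I₂, X, Y, Z} and Q ∈ {I₂⊗I₂, X⊗X, Y⊗Y, Z⊗Z}. -/
theorem stmt_1 (M : M8)
    (hX : M * (I₂ ⊗ₖ (σx ⊗ₖ σx)) = (I₂ ⊗ₖ (σx ⊗ₖ σx)) * M)
    (hY : M * (I₂ ⊗ₖ (σy ⊗ₖ σy)) = (I₂ ⊗ₖ (σy ⊗ₖ σy)) * M)
    (hZ : M * (I₂ ⊗ₖ (σz ⊗ₖ σz)) = (I₂ ⊗ₖ (σz ⊗ₖ σz)) * M) :
    M ∈ Submodule.span ℂ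
      (Set.image2 (fun P Q => P ⊗ₖ Q)
        ({I₂, σx, σy, σz} : Set M2)
        ({I₂ ⊗ₖ I₂, σx ⊗ₖ σx, σy ⊗ₖ σy, σz ⊗ₖ σz} : Set M4)) := by
  rw [eq_sum_single_kronecker_qubitBlock M]
  refine Submodule.sum_mem _ fun i _ => Submodule.sum_mem _ fun j _ => ?_
  have h := Submodule.apply_mem_map₂ (kroneckerBilinear (R := ℂ) (α := ℂ)) (single_mem_span_pauli i j)
    (mem_span_of_commute _ (qubitBlock_commute M _ hX i j) (qubitBlock_commute M _ hZ i j))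
  rw [Submodule.map₂_span_span] at h
  exact h
end
end

section
/- For any two distinct classes l ≠ l' among the four local SU(2) classes G₁, G₂, G₃, G₄, every 8×8 complex matrix that commutes with all three generators of G_l and all three generators of G_{l'} lies in the ℂ-linear span of {I₈, I₂⊗X⊗X, I₂⊗Y⊗Y, I₂⊗Z⊗Z}, where I₈ = I₂⊗I₂⊗I₂. -/
/-!
Write `A, B, C` for `X⊗X`, `Y⊗Y`, `Z⊗Z`. Every generator has the form `σ_k ⊗ t` with
`t ∈ {1, A, B, C}`, and `1, ±A, ±B, ±C` form a commuting group of involutions with `A B = -C`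
and its cyclic variants. For two distinct classes the product of the generators sharing the same
first factor `σ_k` is `I₂ ⊗ (t t')`, and as `k` runs over the three Pauli matrices `t t'` runs over
`A, B, C` up to sign (`secondFactor_mul`). Hence a matrix commuting with both classes commutes
with `I₂⊗A`, `I₂⊗B`, `I₂⊗C`, and, cancelling the second factor, with every `σ_k ⊗ I₄`. Commuting
with `X ⊗ I₄` and `Z ⊗ I₄` forces the form `I₂ ⊗ N`; commuting with `I₂⊗A` and `I₂⊗C` leaves four
free entries in `N`, which are matched by the four spanning matrices (`mem_span_of_commute`).
-/

open Matrix Kronecker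

noncomputable section

/-- The generators of the four local SU(2) classes G₁, G₂, G₃, G₄. -/
def G : Fin 4 → Fin 3 → M8 :=
  ![![σx ⊗ₖ (I₂ ⊗ₖ I₂), σy ⊗ₖ (I₂ ⊗ₖ I₂), σz ⊗ₖ (I₂ ⊗ₖ I₂)],
    ![σx ⊗ₖ (σx ⊗ₖ σx), σy ⊗ₖ (σy ⊗ₖ σy), σz ⊗ₖ (σz ⊗ₖ σz)],
    ![σx ⊗ₖ (σy ⊗ₖ σy), σy ⊗ₖ (σz ⊗ₖ σz), σz ⊗ₖ (σx ⊗ₖ σx)],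
    ![σx ⊗ₖ (σz ⊗ₖ σz), σy ⊗ₖ (σx ⊗ₖ σx), σz ⊗ₖ (σy ⊗ₖ σy)]]

/-- The `l`-th local SU(2) class, as a set of 8×8 matrices. -/
def Gset (l : Fin 4) : Set M8 := Set.range (G l)

/-- The Pauli matrices, indexed as the generators within each class. -/
def pauli : Fin 3 → M2 := ![σx, σy, σz]

/-- The operator on the last two tensor factors in the `k`-th generator of the class `l`. -/
def secondFactor : Fin 4 → Fin 3 → M4 :=
  ![![1, 1, 1],
    ![σx ⊗ₖ σx, σy ⊗ₖ σy, σz ⊗ₖ σz],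
    ![σy ⊗ₖ σy, σz ⊗ₖ σz, σx ⊗ₖ σx],
    ![σz ⊗ₖ σz, σx ⊗ₖ σx, σy ⊗ₖ σy]]

lemma G_eq (l : Fin 4) (k : Fin 3) : G l k = pauli k ⊗ₖ secondFactor l k := by
  fin_cases l <;> fin_cases k <;> simp [G, pauli, secondFactor, I₂]

lemma pauli_mul_self (k : Fin 3) : pauli k * pauli k = 1 := by
  fin_cases k <;> simp [pauli, σx, σy, σz, Matrix.one_fin_two]

lemma xx_mul_xx : (σx ⊗ₖ σx) * (σx ⊗ₖ σx) = (1 : M4) := by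
  have h := pauli_mul_self 0
  simp only [pauli, Matrix.cons_val] at h
  rw [← Matrix.mul_kronecker_mul, h, Matrix.one_kronecker_one]

lemma yy_mul_yy : (σy ⊗ₖ σy) * (σy ⊗ₖ σy) = (1 : M4) := by
  have h := pauli_mul_self 1
  simp only [pauli, Matrix.cons_val] at h
  rw [← Matrix.mul_kronecker_mul, h, Matrix.one_kronecker_one]

lemma zz_mul_zz : (σz ⊗ₖ σz) * (σz ⊗ₖ σz) = (1 : M4) := by
  have h := pauli_mul_self 2
  simp only [pauli, Matrix.cons_val] at h
  rw [← Matrix.mul_kronecker_mul, h, Matrix.one_kronecker_one]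

/-- The phases `±i` of the two single-qubit products multiply to `i² = (-i)² = -1`. -/
lemma kron_neg_of_phase {P Q R : M2} {c : ℂ} (hc : c * c = -1) (h : P * Q = c • R) :
    (P ⊗ₖ P) * (Q ⊗ₖ Q) = -(R ⊗ₖ R) := by
  rw [← Matrix.mul_kronecker_mul, h, Matrix.smul_kronecker, Matrix.kronecker_smul, smul_smul, hc,
    neg_one_smul]

lemma xx_mul_yy : (σx ⊗ₖ σx) * (σy ⊗ₖ σy) = -(σz ⊗ₖ σz) :=
  kron_neg_of_phase (c := Complex.I) (by simp) (by simp [σx, σy, σz])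

lemma yy_mul_xx : (σy ⊗ₖ σy) * (σx ⊗ₖ σx) = -(σz ⊗ₖ σz) :=
  kron_neg_of_phase (c := -Complex.I) (by simp) (by simp [σx, σy, σz])

lemma yy_mul_zz : (σy ⊗ₖ σy) * (σz ⊗ₖ σz) = -(σx ⊗ₖ σx) :=
  kron_neg_of_phase (c := Complex.I) (by simp) (by simp [σx, σy, σz])

lemma zz_mul_yy : (σz ⊗ₖ σz) * (σy ⊗ₖ σy) = -(σx ⊗ₖ σx) :=
  kron_neg_of_phase (c := -Complex.I) (by simp) (by simp [σx, σy, σz])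

lemma zz_mul_xx : (σz ⊗ₖ σz) * (σx ⊗ₖ σx) = -(σy ⊗ₖ σy) :=
  kron_neg_of_phase (c := Complex.I) (by simp) (by simp [σx, σy, σz])

lemma xx_mul_zz : (σx ⊗ₖ σx) * (σz ⊗ₖ σz) = -(σy ⊗ₖ σy) :=
  kron_neg_of_phase (c := -Complex.I) (by simp) (by simp [σx, σy, σz])

lemma secondFactor_mul_self (l : Fin 4) (k : Fin 3) :
    secondFactor l k * secondFactor l k = 1 := by
  fin_cases l <;> fin_cases k <;> simp [secondFactor, xx_mul_xx, yy_mul_yy, zz_mul_zz]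

/-- The classes multiply like the Klein four-group up to sign: the product of two distinct classes
of second factors is, up to sign, a class `m` other than the trivial one. -/
lemma secondFactor_mul (l l' : Fin 4) (hll' : l ≠ l') :
    ∃ m : Fin 4, m ≠ 0 ∧ ∀ k, secondFactor l k * secondFactor l' k = secondFactor m k ∨
      secondFactor l k * secondFactor l' k = -secondFactor m k := by
  -- With classes numbered from `0`, the Klein four-group product is bitwise exclusive or.
  refine ⟨l ^^^ l', by revert l l'; decide, fun k => ?_⟩
  fin_cases l <;> fin_cases l' <;> first | exact absurd rfl hll' | skip
  all_goals
    fin_cases k <;>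
    simp [secondFactor, xx_mul_yy, yy_mul_xx, yy_mul_zz, zz_mul_yy, zz_mul_xx, xx_mul_zz]

/-- Every nontrivial class has the same second factors `X⊗X`, `Y⊗Y`, `Z⊗Z`, in some order. -/
lemma secondFactor_eq (m : Fin 4) (hm : m ≠ 0) (l : Fin 4) (k : Fin 3) :
    secondFactor l k = 1 ∨ ∃ j, secondFactor l k = secondFactor m j := by
  fin_cases m <;> first | exact absurd rfl hm | skip
  all_goals
    fin_cases l <;> fin_cases k <;> simp [secondFactor, Fin.exists_fin_succ]

/-- A matrix commuting with `X⊗I₄`, `Z⊗I₄`, `I₂⊗X⊗X` and `I₂⊗Z⊗Z` is determined by four of its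
entries, which serve to read off its coefficients. -/
lemma mem_span_of_commute_s4 (M : M8)
    (hx : Commute M (σx ⊗ₖ (1 : M4))) (hz : Commute M (σz ⊗ₖ (1 : M4)))
    (ha : Commute M ((1 : M2) ⊗ₖ (σx ⊗ₖ σx))) (hc : Commute M ((1 : M2) ⊗ₖ (σz ⊗ₖ σz))) :
    M ∈ Submodule.span ℂ
      ({I₂ ⊗ₖ (I₂ ⊗ₖ I₂), I₂ ⊗ₖ (σx ⊗ₖ σx), I₂ ⊗ₖ (σy ⊗ₖ σy), I₂ ⊗ₖ (σz ⊗ₖ σz)} : Set M8) := by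
  -- `M` has equal diagonal blocks and zero off-diagonal blocks in the first tensor factor.
  have ex : ∀ u v, M (1, u) (1, v) = M (0, u) (0, v) := fun u v => by
    have := congrFun₂ hx.eq (1, u) (0, v)
    simpa [Matrix.mul_apply, Fintype.sum_prod_type, σx, Matrix.one_apply, Prod.ext_iff,
      ite_and] using this
  have ez : ∀ u v, M (0, u) (1, v) = 0 := fun u v => by
    have := congrFun₂ hz.eq (0, u) (1, v)
    simpa [Matrix.mul_apply, Fintype.sum_prod_type, σz, Matrix.one_apply,
      neg_eq_self, self_eq_neg] using this
  have ez' : ∀ u v, M (1, u) (0, v) = 0 := fun u v => by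
    have := congrFun₂ hz.eq (1, u) (0, v)
    simpa [Matrix.mul_apply, Fintype.sum_prod_type, σz, Matrix.one_apply,
      neg_eq_self, self_eq_neg] using this
  -- Commuting with `I₂⊗X⊗X`: the diagonal block is invariant under flipping both bits.
  have ea : ∀ i j k n, M (0, 1 - i, 1 - j) (0, k, n) = M (0, i, j) (0, 1 - k, 1 - n) := by
    intro i j k n
    have := congrFun₂ ha.eq (0, i, j) (0, k, n)
    fin_cases i <;> fin_cases j <;> fin_cases k <;> fin_cases n <;>
      simpa [Matrix.mul_apply, Fintype.sum_prod_type, σx, Matrix.one_apply] using this.symm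
  -- Commuting with `I₂⊗Z⊗Z`: the diagonal block preserves the parity of the two bits.
  have ec : ∀ i j k n, i + j ≠ k + n → M (0, i, j) (0, k, n) = 0 := by
    intro i j k n hne
    have := congrFun₂ hc.eq (0, i, j) (0, k, n)
    fin_cases i <;> fin_cases j <;> fin_cases k <;> fin_cases n <;>
      first
      | exact absurd rfl hne
      | simpa [Matrix.mul_apply, Fintype.sum_prod_type, σz, Matrix.one_apply,
          neg_eq_self, self_eq_neg] using this
  -- The remaining free entries are the coefficients of `|00⟩⟨00|`, `|00⟩⟨11|`, `|01⟩⟨01|` and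
  -- `|01⟩⟨10|` in the diagonal block.
  set p := M (0, 0, 0) (0, 0, 0) with hp
  set q := M (0, 0, 0) (0, 1, 1) with hq
  set r := M (0, 0, 1) (0, 0, 1) with hr
  set s := M (0, 0, 1) (0, 1, 0) with hs
  have hp' : M (0, 1, 1) (0, 1, 1) = p := by simpa using ea 0 0 1 1
  have hq' : M (0, 1, 1) (0, 0, 0) = q := by simpa using ea 0 0 0 0
  have hr' : M (0, 1, 0) (0, 1, 0) = r := by simpa using ea 0 1 1 0
  have hs' : M (0, 1, 0) (0, 0, 1) = s := by simpa using ea 0 1 0 1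
  have key : M = ((p + r) / 2) • (I₂ ⊗ₖ (I₂ ⊗ₖ I₂)) + ((q + s) / 2) • (I₂ ⊗ₖ (σx ⊗ₖ σx))
      + ((s - q) / 2) • (I₂ ⊗ₖ (σy ⊗ₖ σy)) + ((p - r) / 2) • (I₂ ⊗ₖ (σz ⊗ₖ σz)) := by
    ext ⟨a, i, j⟩ ⟨b, k, n⟩
    have hec := ec i j k n
    fin_cases a <;> fin_cases b <;>
    fin_cases i <;> fin_cases j <;> fin_cases k <;> fin_cases n <;>
      simp [I₂, σx, σy, σz, ex, ez, ez', ← hp, ← hq, ← hr, ← hs, hp', hq', hr', hs'] at hec ⊢ <;>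
      first | exact hec | ring
  rw [key]
  refine add_mem (add_mem (add_mem ?_ ?_) ?_) ?_ <;>
    exact Submodule.smul_mem _ _ (Submodule.subset_span (by simp))


/-- For distinct classes l ≠ l', any 8×8 matrix commuting with all generators of both classes lies
in the ℂ-span of {I₈, I₂⊗X⊗X, I₂⊗Y⊗Y, I₂⊗Z⊗Z}. -/
theorem stmt_4 (l l' : Fin 4) (hll' : l ≠ l') (M : M8)
    (h : ∀ P ∈ Gset l, M * P = P * M)
    (h' : ∀ P ∈ Gset l', M * P = P * M) :
    M ∈ Submodule.span ℂ
      ({I₂ ⊗ₖ (I₂ ⊗ₖ I₂), I₂ ⊗ₖ (σx ⊗ₖ σx), I₂ ⊗ₖ (σy ⊗ₖ σy), I₂ ⊗ₖ (σz ⊗ₖ σz)} : Set M8) := by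
  obtain ⟨m, hm, hmul⟩ := secondFactor_mul l l' hll'
  have hG : ∀ k, Commute M (pauli k ⊗ₖ secondFactor l k) := fun k => by
    rw [← G_eq]; exact h _ ⟨k, rfl⟩
  have hG' : ∀ k, Commute M (pauli k ⊗ₖ secondFactor l' k) := fun k => by
    rw [← G_eq]; exact h' _ ⟨k, rfl⟩
  have hm_comm : ∀ k, Commute M ((1 : M2) ⊗ₖ secondFactor m k) := fun k => by
    have hk := (hG k).mul_right (hG' k)
    rw [← Matrix.mul_kronecker_mul, pauli_mul_self] at hk
    rcases hmul k with e | e <;> rw [e] at hk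
    · exact hk
    · have hneg : (1 : M2) ⊗ₖ (-secondFactor m k) = -((1 : M2) ⊗ₖ secondFactor m k) := by
        rw [← neg_one_smul ℂ, Matrix.kronecker_smul, neg_one_smul]
      rw [hneg] at hk
      exact Commute.neg_right_iff.mp hk
  have hsecond : ∀ n k, Commute M ((1 : M2) ⊗ₖ secondFactor n k) := fun n k => by
    rcases secondFactor_eq m hm n k with e | ⟨j, e⟩ <;> rw [e]
    · rw [Matrix.one_kronecker_one]; exact Commute.one_right M
    · exact hm_comm j
  have hfirst : ∀ k, Commute M (pauli k ⊗ₖ (1 : M4)) := fun k => by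
    have hk := (hG k).mul_right (hsecond l k)
    rwa [← Matrix.mul_kronecker_mul, secondFactor_mul_self, mul_one] at hk
  exact mem_span_of_commute_s4 M (hfirst 0) (hfirst 2) (hsecond 1 0) (hsecond 1 2)
end
end

section
/- There exists a unitary 8×8 complex matrix U (an 'encoder') such that for every matrix G in the real span of {X⊗X⊗X, Y⊗Y⊗Y, Z⊗Z⊗Z}, the conjugate U·G·U⁻¹ lies in the real span of {X⊗I₂⊗I₂, Y⊗I₂⊗I₂, Z⊗I₂⊗I₂}; that is, conjugation by U maps the SU(2)-symmetry generator space G₂ into the single-qubit generator space G₁. -/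
/-!
The encoder is a permutation matrix. In the computational basis `X⊗X⊗X` flips all three bits and
`Z⊗Z⊗Z` is the sign `(-1)^(a+b+c)`. The linear change of bits
`(a, b, c) ↦ (a+b+c, a+b, a+c)` over `𝔽₂` makes the parity the first bit, while the other two new
bits are unchanged by the total flip. Hence the associated permutation matrix conjugates
`X⊗X⊗X` to `X⊗I⊗I` and `Z⊗Z⊗Z` to `Z⊗I⊗I`. Since `Y = iXZ`, it conjugates `Y⊗Y⊗Y` to
`-(Y⊗I⊗I)`; the sign is harmless in a real span.
-/

open Matrix Kronecker

noncomputable section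

/-- The decoding permutation of basis labels; its inverse is
`(a, b, c) ↦ (a+b+c, a+b, a+c)`, with addition modulo 2. -/
def decodeBits : Equiv.Perm (Fin 2 × Fin 2 × Fin 2) where
  toFun p := (p.1 + p.2.1 + p.2.2, p.1 + p.2.2, p.1 + p.2.1)
  invFun p := (p.1 + p.2.1 + p.2.2, p.1 + p.2.1, p.1 + p.2.2)
  left_inv := by decide
  right_inv := by decide

/-- The permutation matrix sending the basis vector `|a, b, c⟩` to `|a+b+c, a+b, a+c⟩`. -/
def encoder : M8 := (1 : M8).submatrix decodeBits id

lemma encoder_mul_conjTranspose : encoder * encoderᴴ = 1 := by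
  simp [encoder, Matrix.conjTranspose_submatrix,
    ← Matrix.submatrix_mul _ _ _ id _ Function.bijective_id]

lemma encoder_conj (G : M8) :
    encoder * G * encoder⁻¹ = G.submatrix decodeBits decodeBits := by
  rw [Matrix.inv_eq_right_inv encoder_mul_conjTranspose]
  have h : encoder * G = G.submatrix decodeBits id := by
    simpa [encoder] using
      (Matrix.submatrix_mul (1 : M8) G decodeBits id id Function.bijective_id).symm
  rw [h]
  simpa [encoder, Matrix.conjTranspose_submatrix] using
    (Matrix.submatrix_mul G (1 : M8) decodeBits id decodeBits Function.bijective_id).symm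

lemma submatrix_xxx : (σx ⊗ₖ (σx ⊗ₖ σx)).submatrix decodeBits decodeBits
    = σx ⊗ₖ (I₂ ⊗ₖ I₂) := by
  ext ⟨a, b, c⟩ ⟨d, e, f⟩
  fin_cases a <;> fin_cases b <;> fin_cases c <;> fin_cases d <;> fin_cases e <;> fin_cases f <;>
    simp [decodeBits, σx, I₂]

lemma submatrix_yyy : (σy ⊗ₖ (σy ⊗ₖ σy)).submatrix decodeBits decodeBits
    = -(σy ⊗ₖ (I₂ ⊗ₖ I₂)) := by
  ext ⟨a, b, c⟩ ⟨d, e, f⟩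
  fin_cases a <;> fin_cases b <;> fin_cases c <;> fin_cases d <;> fin_cases e <;> fin_cases f <;>
    simp [decodeBits, σy, I₂]

lemma submatrix_zzz : (σz ⊗ₖ (σz ⊗ₖ σz)).submatrix decodeBits decodeBits
    = σz ⊗ₖ (I₂ ⊗ₖ I₂) := by
  ext ⟨a, b, c⟩ ⟨d, e, f⟩
  fin_cases a <;> fin_cases b <;> fin_cases c <;> fin_cases d <;> fin_cases e <;> fin_cases f <;>
    simp [decodeBits, σz, I₂]


/-- There is a unitary encoder U conjugating the SU(2)-symmetry generator space
G₂ = span_ℝ{X⊗X⊗X, Y⊗Y⊗Y, Z⊗Z⊗Z} into the single-qubit generator space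
G₁ = span_ℝ{X⊗I₂⊗I₂, Y⊗I₂⊗I₂, Z⊗I₂⊗I₂}. -/
theorem stmt_13 :
    ∃ U : M8, U * Uᴴ = 1 ∧
      ∀ G ∈ Submodule.span ℝ
          ({σx ⊗ₖ (σx ⊗ₖ σx), σy ⊗ₖ (σy ⊗ₖ σy), σz ⊗ₖ (σz ⊗ₖ σz)} : Set M8),
        U * G * U⁻¹ ∈ Submodule.span ℝ
          ({σx ⊗ₖ (I₂ ⊗ₖ I₂), σy ⊗ₖ (I₂ ⊗ₖ I₂), σz ⊗ₖ (I₂ ⊗ₖ I₂)} : Set M8) := by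
  refine ⟨encoder, encoder_mul_conjTranspose, fun G hG => ?_⟩
  rw [encoder_conj]
  induction hG using Submodule.span_induction with
  | mem G hG =>
    rcases hG with rfl | rfl | rfl
    · rw [submatrix_xxx]
      exact Submodule.subset_span (by simp)
    · rw [submatrix_yyy]
      exact neg_mem (Submodule.subset_span (by simp))
    · rw [submatrix_zzz]
      exact Submodule.subset_span (by simp)
  | zero => exact zero_mem _
  | add A B _ _ hA hB => exact add_mem hA hB
  | smul r A _ hA => exact Submodule.smul_mem _ r hA
end
end
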